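/- arXiv:1604.07575 — 2 statements merged into one kernel-verified Lean document; each statement's English description precedes it below -/
import Mathlib

section
/- Let (x_k)_{k≥1} be a sequence of positive reals with ∑_{k=1}^∞ x_k = X < ∞ satisfying: (i) A(x) + A(x) = [0, 2X] (the set of all sums a + b with a, b ∈ A(x) equals the interval [0,2X]); (ii) for every a ∈ (0, 2X) there exists a nondegenerate interval I_a ⊆ A(x) such that for every t ∈ I_a there exists z ∈ A(x) with t + z = a. Let ∑_{k=1}^∞ y_k be a conditionally convergent series of reals with sum Y. Define the interleaved sequence of pairs in ℝ² by x̄_{2k−1} = x̄_{2k} = x_k, ȳ_{2k−1} = y_k, ȳ_{2k} = 0 for every k ≥ 1. Then A((x̄_n, ȳ_n)_n) = ((0, 2X) × ℝ) ∪ {(0,0), (2X, Y)}. -/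
open Filter Topology Pointwise

/-- The achievement set of a sequence: all limits of partial sums of subseries. -/
def achv {X : Type*} [AddCommMonoid X] [TopologicalSpace X] (x : ℕ → X) : Set X :=
  {s | ∃ ε : ℕ → Bool,
    Tendsto (fun N => ∑ n ∈ Finset.range N, if ε n then x n else 0) atTop (𝓝 s)}

/-!
Positivity of `x` makes the empty and the full selection the only ones with first coordinate `0`
or `2X`. For `a` strictly between, fix a height `b`. Since `∑ y` converges conditionally, finitely
many choices of terms can be prescribed and the rest still made so that the chosen `y`'s sum to
`b`; since `∑ x` converges absolutely, the rest barely affects the sum of the chosen `x`'s. So the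
`x`-sums compatible with height `b` are dense in `A(x)`, and one of them, `t`, lies in the
interval `I_a`. The second copy of `x`, which carries no `y`, then supplies the missing `a - t`.
-/

section ConditionalSums

lemma hasSum_conditional_iff_tendsto_sum_range {M : Type*} [AddCommMonoid M] [TopologicalSpace M]
    {f : ℕ → M} {a : M} :
    HasSum f a (.conditional ℕ) ↔
      Tendsto (fun N => ∑ n ∈ Finset.range N, f n) atTop (𝓝 a) := by
  rw [HasSum, SummationFilter.conditional_filter_eq_map_range, tendsto_map'_iff]
  rfl

lemma hasSum_conditional_of_hasSum {M : Type*} [AddCommMonoid M] [TopologicalSpace M]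
    {f : ℕ → M} {a : M} (hf : HasSum f a) : HasSum f a (.conditional ℕ) :=
  hf.mono_left (SummationFilter.conditional ℕ).le_atTop

lemma tendsto_zero_of_summable_conditional {G : Type*} [AddCommGroup G] [TopologicalSpace G]
    [IsTopologicalAddGroup G] {f : ℕ → G} (hf : Summable f (.conditional ℕ)) :
    Tendsto f atTop (𝓝 0) := by
  obtain ⟨a, ha⟩ := hf
  rw [hasSum_conditional_iff_tendsto_sum_range] at ha
  simpa only [Finset.sum_range_succ, add_sub_cancel_left, sub_self] using
    ((tendsto_add_atTop_iff_nat 1).2 ha).sub ha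

lemma summable_of_summable_conditional_of_nonneg {f : ℕ → ℝ} (hf : Summable f (.conditional ℕ))
    (hf₀ : ∀ n, 0 ≤ f n) : Summable f :=
  let ⟨a, ha⟩ := hf
  ⟨a, (hasSum_iff_tendsto_nat_of_nonneg hf₀ a).2 (hasSum_conditional_iff_tendsto_sum_range.1 ha)⟩

lemma not_summable_posPart_of_summable_conditional {f : ℕ → ℝ}
    (hf : Summable f (.conditional ℕ)) (hf' : ¬ Summable f) : ¬ Summable fun n => (f n)⁺ := by
  intro hpos
  have hneg : Summable fun n => (f n)⁻ := by
    refine summable_of_summable_conditional_of_nonneg ?_ fun n => negPart_nonneg (f n)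
    refine ((hasSum_conditional_of_hasSum hpos.hasSum).summable.sub hf).congr fun n => ?_
    linarith [posPart_sub_negPart (f n)]
  exact hf' ((hpos.sub hneg).congr fun n => posPart_sub_negPart (f n))

end ConditionalSums

section Greedy

/-- Partial sums of the greedy subseries of `∑ f` with target `r`: a term is taken whenever the
sum stays at most `r`. -/
noncomputable def greedySum (f : ℕ → ℝ) (r : ℝ) : ℕ → ℝ
  | 0 => 0
  | n + 1 => if greedySum f r n + f n ≤ r then greedySum f r n + f n else greedySum f r n

/-- The indices of the terms taken by the greedy subseries of `∑ f` with target `r`. -/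
def greedySet (f : ℕ → ℝ) (r : ℝ) : Set ℕ :=
  {n | greedySum f r n + f n ≤ r}

variable {f : ℕ → ℝ} {r : ℝ}

lemma sum_range_indicator_greedySet (N : ℕ) :
    ∑ n ∈ Finset.range N, (greedySet f r).indicator f n = greedySum f r N := by
  induction N with
  | zero => rfl
  | succ N ih =>
    rw [Finset.sum_range_succ, ih, greedySum]
    split_ifs with h
    · rw [Set.indicator_of_mem (show N ∈ greedySet f r from h)]
    · rw [Set.indicator_of_notMem (show N ∉ greedySet f r from h), add_zero]

lemma greedySum_le (hr : 0 ≤ r) (N : ℕ) : greedySum f r N ≤ r := by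
  induction N with
  | zero => exact hr
  | succ N ih =>
    rw [greedySum]
    split_ifs with h
    exacts [h, ih]

lemma hasSum_indicator_greedySet (hf : ∀ n, 0 ≤ f n) (hf₀ : Tendsto f atTop (𝓝 0))
    (hf' : ¬ Summable f) (hr : 0 ≤ r) : HasSum ((greedySet f r).indicator f) r := by
  have hg : ∀ n, 0 ≤ (greedySet f r).indicator f n := Set.indicator_nonneg fun n _ => hf n
  have hle : ∀ N, ∑ n ∈ Finset.range N, (greedySet f r).indicator f n ≤ r := fun N =>
    sum_range_indicator_greedySet (f := f) N ▸ greedySum_le hr N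
  have hsum := summable_of_sum_range_le hg hle
  suffices h : r ≤ ∑' n, (greedySet f r).indicator f n from
    (hsum.hasSum_iff).2 ((hsum.tsum_le_of_sum_range_le hle).antisymm h)
  -- If the greedy sum fell short of `r`, all sufficiently small terms would have been taken.
  by_contra! hlt
  have htaken : ∀ᶠ n in atTop, n ∈ greedySet f r := by
    filter_upwards [hf₀.eventually_lt_const (sub_pos.2 hlt)] with n hn
    have hpartial := hsum.sum_le_tsum (Finset.range n) fun n _ => hg n
    rw [sum_range_indicator_greedySet] at hpartial
    change greedySum f r n + f n ≤ r
    linarith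
  refine hf' ((summable_congr_cofinite ?_).1 hsum)
  rw [Nat.cofinite_eq_atTop]
  filter_upwards [htaken] with n hn using Set.indicator_of_mem hn f

end Greedy

section AchievementSet

variable {M : Type*} [AddCommMonoid M] [TopologicalSpace M] {x : ℕ → M} {s : M}

lemma mem_achv_iff : s ∈ achv x ↔ ∃ S : Set ℕ, HasSum (S.indicator x) s (.conditional ℕ) := by
  classical
  simp only [hasSum_conditional_iff_tendsto_sum_range]
  constructor
  · rintro ⟨ε, h⟩
    exact ⟨{n | ε n}, by simpa only [Set.indicator_apply, Set.mem_ofPred_eq] using h⟩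
  · rintro ⟨S, h⟩
    exact ⟨fun n => decide (n ∈ S), by simpa only [Set.indicator_apply, decide_eq_true_eq] using h⟩

lemma mem_achv_of_hasSum (h : HasSum x s (.conditional ℕ)) : s ∈ achv x :=
  mem_achv_iff.2 ⟨Set.univ, by rwa [Set.indicator_univ]⟩

lemma zero_mem_achv (x : ℕ → M) : 0 ∈ achv x :=
  mem_achv_iff.2 ⟨∅, by rw [Set.indicator_empty]; exact hasSum_zero⟩

lemma neg_mem_achv_neg {G : Type*} [AddCommGroup G] [TopologicalSpace G]
    [IsTopologicalAddGroup G] {x : ℕ → G} {s : G} (h : s ∈ achv x) : -s ∈ achv (-x) := by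
  obtain ⟨S, hS⟩ := mem_achv_iff.1 h
  exact mem_achv_iff.2 ⟨S, by rw [Set.indicator_neg']; exact hS.neg⟩

lemma prodMk_mem_achv {N : Type*} [AddCommMonoid N] [TopologicalSpace N] {y : ℕ → N} {t : N}
    {S : Set ℕ} (hx : HasSum (S.indicator x) s (.conditional ℕ))
    (hy : HasSum (S.indicator y) t (.conditional ℕ)) :
    (s, t) ∈ achv fun n => (x n, y n) := by
  refine mem_achv_iff.2 ⟨S, (hx.prodMk hy).congr_fun fun n => ?_⟩
  by_cases hn : n ∈ S <;> simp [hn, Prod.ext_iff]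

lemma prodMk_zero_mem_achv {N : Type*} [AddCommMonoid N] [TopologicalSpace N]
    (h : s ∈ achv x) : (s, (0 : N)) ∈ achv fun n => (x n, (0 : N)) := by
  obtain ⟨S, hS⟩ := mem_achv_iff.1 h
  exact prodMk_mem_achv hS (by rw [Set.indicator_zero]; exact hasSum_zero)

lemma mem_achv_of_le_of_hasSum_conditional {y : ℕ → ℝ} {Y c : ℝ}
    (hy : HasSum y Y (.conditional ℕ)) (hy' : ¬ Summable y) (hc : c ≤ Y) : c ∈ achv y := by
  have hpos₀ : Tendsto (fun n => (y n)⁺) atTop (𝓝 0) := by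
    simpa [posPart_def] using
      (tendsto_zero_of_summable_conditional hy.summable).sup_nhds
        (tendsto_const_nhds (x := (0 : ℝ)))
  -- Removing nonnegative terms of total `Y - c` leaves a subseries with sum `c`.
  have hremoved := hasSum_indicator_greedySet (fun n => posPart_nonneg (y n)) hpos₀
    (not_summable_posPart_of_summable_conditional hy.summable hy') (sub_nonneg.2 hc)
  set R := greedySet (fun n => (y n)⁺) (Y - c)
  have hR : (R ∩ {n | 0 ≤ y n}).indicator y = R.indicator fun n => (y n)⁺ := by
    rw [← Set.indicator_indicator]
    congr 1 with n
    rcases le_or_gt 0 (y n) with hn | hn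
    · simp [hn]
    · simp [hn.not_ge, hn.le]
  refine mem_achv_iff.2 ⟨(R ∩ {n | 0 ≤ y n})ᶜ, ?_⟩
  rw [Set.indicator_compl, hR, ← sub_sub_cancel Y c]
  exact hy.sub (hasSum_conditional_of_hasSum hremoved)

theorem achv_eq_univ {y : ℕ → ℝ} (hy : Summable y (.conditional ℕ)) (hy' : ¬ Summable y) :
    achv y = Set.univ := by
  obtain ⟨Y, hY⟩ := hy
  refine Set.eq_univ_of_forall fun c => ?_
  rcases le_total c Y with hc | hc
  · exact mem_achv_of_le_of_hasSum_conditional hY hy' hc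
  · rw [← neg_neg c, ← neg_neg y]
    exact neg_mem_achv_neg <|
      mem_achv_of_le_of_hasSum_conditional hY.neg (mt summable_neg_iff.1 hy') (neg_le_neg hc)

lemma exists_hasSum_indicator_of_prescribed_on_finset {y : ℕ → ℝ}
    (hy : Summable y (.conditional ℕ)) (hy' : ¬ Summable y) (F : Finset ℕ) (S₀ : Set ℕ) (b : ℝ) :
    ∃ S : Set ℕ, (∀ n ∈ F, n ∈ S ↔ n ∈ S₀) ∧ HasSum (S.indicator y) b (.conditional ℕ) := by
  have hfin (g : ℕ → ℝ) (L : SummationFilter ℕ) [L.LeAtTop] :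
      HasSum ((F : Set ℕ).indicator g) (∑ n ∈ F, (F : Set ℕ).indicator g n) L :=
    hasSum_sum_of_ne_finset_zero fun n hn => Set.indicator_of_notMem hn g
  set z := ((F : Set ℕ)ᶜ).indicator y with hz
  have hz_cond : Summable z (.conditional ℕ) := by
    rw [hz, Set.indicator_compl]
    exact hy.sub (hfin y _).summable
  have hz_not : ¬ Summable z := fun h => hy' <| by
    rw [← Set.indicator_self_add_compl (F : Set ℕ) y]
    exact (hfin y _).summable.add h
  obtain ⟨T, hT⟩ := mem_achv_iff.1 <| (achv_eq_univ hz_cond hz_not).symm ▸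
    Set.mem_univ (b - ∑ n ∈ F, (F : Set ℕ).indicator (S₀.indicator y) n)
  refine ⟨(F : Set ℕ).ite S₀ T, fun n hn => by simp [Set.ite, hn], ?_⟩
  have hsplit : ((F : Set ℕ).ite S₀ T).indicator y =
      (F : Set ℕ).indicator (S₀.indicator y) + T.indicator z := by
    classical
    ext n
    by_cases hn : n ∈ F <;> simp [hz, Set.ite, Set.indicator_apply, hn]
  rw [hsplit, ← add_sub_cancel (∑ n ∈ F, (F : Set ℕ).indicator (S₀.indicator y) n) b]
  exact (hfin _ _).add hT

theorem achv_subset_closure_achv_prodMk_fiber {E : Type*} [NormedAddCommGroup E] [CompleteSpace E]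
    {x : ℕ → E} {y : ℕ → ℝ} (hx : Summable fun n => ‖x n‖) (hy : Summable y (.conditional ℕ))
    (hy' : ¬ Summable y) (b : ℝ) :
    achv x ⊆ closure {t | (t, b) ∈ achv fun n => (x n, y n)} := by
  intro s hs
  obtain ⟨S₀, hS₀⟩ := mem_achv_iff.1 hs
  choose S hagree hSy using
    fun F => exists_hasSum_indicator_of_prescribed_on_finset hy hy' F S₀ b
  have hSx (A : Set ℕ) : HasSum (A.indicator x) (∑' n, A.indicator x n) (.conditional ℕ) :=
    hasSum_conditional_of_hasSum (hx.of_norm.indicator A).hasSum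
  have htends : Tendsto (fun F => ∑' n, (S F).indicator x n) atTop (𝓝 s) := by
    rw [hS₀.unique (hSx S₀)]
    refine tendsto_tsum_of_dominated_convergence hx (fun n => ?_)
      (.of_forall fun F n => norm_indicator_le_norm_self x n)
    refine tendsto_const_nhds.congr' ?_
    filter_upwards [eventually_ge_atTop {n}] with F hF
    classical
    simp only [Set.indicator_apply, hagree F n (Finset.singleton_subset_iff.1 hF)]
  exact mem_closure_of_tendsto htends (.of_forall fun F => prodMk_mem_achv (hSx (S F)) (hSy F))

end AchievementSet

section Order

lemma mem_Ioo_of_hasSum_indicator {ι α : Type*} [AddCommGroup α] [PartialOrder α]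
    [IsOrderedAddMonoid α] [TopologicalSpace α] [IsTopologicalAddGroup α] [OrderClosedTopology α]
    {L : SummationFilter ι} [L.NeBot] [L.LeAtTop] {f : ι → α} {a s : α} {S : Set ι}
    (hf : ∀ i, 0 < f i) (ha : HasSum f a L) (hs : HasSum (S.indicator f) s L)
    (hS : S.Nonempty) (hS' : S ≠ Set.univ) : s ∈ Set.Ioo 0 a := by
  obtain ⟨i, hi⟩ := hS
  obtain ⟨j, hj⟩ := (Set.ne_univ_iff_exists_notMem S).1 hS'
  constructor
  · refine hasSum_lt (i := i) (fun k => Set.indicator_nonneg (fun k _ => (hf k).le) k) ?_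
      hasSum_zero hs
    simpa [hi] using hf i
  · refine hasSum_lt (i := j) (Set.indicator_le_self' fun k _ => (hf k).le) ?_ hs ha
    simpa [hj] using hf j

theorem achv_subset_of_fst_pos {α E : Type*} [AddCommGroup α] [PartialOrder α]
    [IsOrderedAddMonoid α] [TopologicalSpace α] [IsTopologicalAddGroup α] [OrderClosedTopology α]
    [AddCommMonoid E] [TopologicalSpace E] [T2Space E] {z : ℕ → α × E} {a : α} {c : E}
    (hpos : ∀ n, 0 < (z n).1) (hz : HasSum z (a, c) (.conditional ℕ)) :
    achv z ⊆ Set.Ioo 0 a ×ˢ Set.univ ∪ {(0, 0), (a, c)} := by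
  intro p hp
  obtain ⟨S, hS⟩ := mem_achv_iff.1 hp
  rcases S.eq_empty_or_nonempty with rfl | hne
  · rw [Set.indicator_empty] at hS
    exact .inr (.inl (hS.unique hasSum_zero))
  rcases eq_or_ne S Set.univ with rfl | hne'
  · rw [Set.indicator_univ] at hS
    exact .inr (.inr (hS.unique hz))
  have hfst : HasSum (S.indicator fun n => (z n).1) p.1 (.conditional ℕ) := by
    have h := hS.map (AddMonoidHom.fst α E) continuous_fst
    rwa [← Set.indicator_comp_of_zero (map_zero (AddMonoidHom.fst α E))] at h
  exact .inl ⟨mem_Ioo_of_hasSum_indicator hpos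
    (hz.map (AddMonoidHom.fst α E) continuous_fst) hfst hne hne', trivial⟩

lemma inter_nonempty_of_ordConnected_of_subset_closure {α : Type*} [LinearOrder α]
    [TopologicalSpace α] [OrderTopology α] [DenselyOrdered α] {I D : Set α}
    (hI : I.OrdConnected) (hnt : I.Nontrivial) (hID : I ⊆ closure D) : (I ∩ D).Nonempty := by
  obtain ⟨p, hp, q, hq, hpq⟩ := hnt.exists_lt
  obtain ⟨m, hm⟩ := exists_between hpq
  have hIoo : Set.Ioo p q ⊆ I := Set.Ioo_subset_Icc_self.trans (hI.out hp hq)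
  exact (mem_closure_iff.1 (hID (hIoo hm)) _ isOpen_Ioo hm).mono
    (Set.inter_subset_inter_left D hIoo)

end Order

section Interleave

/-- The sequence `u 0, v 0, u 1, v 1, …`. -/
def interleave {α : Type*} (u v : ℕ → α) (n : ℕ) : α :=
  if n % 2 = 0 then u (n / 2) else v (n / 2)

lemma sum_range_interleave {M : Type*} [AddCommMonoid M] (u v : ℕ → M) (N : ℕ) :
    ∑ n ∈ Finset.range N, interleave u v n =
      ∑ k ∈ Finset.range ((N + 1) / 2), u k + ∑ k ∈ Finset.range (N / 2), v k := by
  induction N with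
  | zero => simp
  | succ N ih =>
    rw [Finset.sum_range_succ, ih, interleave]
    have hsucc : (N + 1 + 1) / 2 = N / 2 + 1 := by omega
    rcases Nat.mod_two_eq_zero_or_one N with h | h
    · have hhalf : (N + 1) / 2 = N / 2 := by omega
      rw [hsucc, hhalf, Finset.sum_range_succ, if_pos h, add_right_comm]
    · have hhalf : (N + 1) / 2 = N / 2 + 1 := by omega
      rw [hsucc, hhalf, Finset.sum_range_succ v, if_neg (by omega), add_assoc]

lemma indicator_interleave {M : Type*} [Zero M] (S T : Set ℕ) (u v : ℕ → M) :
    {n | interleave (· ∈ S) (· ∈ T) n}.indicator (interleave u v) =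
      interleave (S.indicator u) (T.indicator v) := by
  classical
  ext n
  by_cases hn : n % 2 = 0 <;> simp [interleave, Set.indicator_apply, hn]

variable {M : Type*} [AddCommMonoid M] [TopologicalSpace M] [ContinuousAdd M] {u v : ℕ → M}

lemma hasSum_conditional_interleave {a b : M} (hu : HasSum u a (.conditional ℕ))
    (hv : HasSum v b (.conditional ℕ)) : HasSum (interleave u v) (a + b) (.conditional ℕ) := by
  simp only [hasSum_conditional_iff_tendsto_sum_range, sum_range_interleave] at *
  have hhalf : Tendsto (fun N : ℕ => N / 2) atTop atTop :=
    Nat.tendsto_div_const_atTop two_ne_zero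
  exact (hu.comp (hhalf.comp (tendsto_add_atTop_nat 1))).add (hv.comp hhalf)

theorem achv_add_achv_subset_achv_interleave : achv u + achv v ⊆ achv (interleave u v) := by
  rintro _ ⟨s, hs, t, ht, rfl⟩
  obtain ⟨S, hS⟩ := mem_achv_iff.1 hs
  obtain ⟨T, hT⟩ := mem_achv_iff.1 ht
  refine mem_achv_iff.2 ⟨{n | interleave (· ∈ S) (· ∈ T) n}, ?_⟩
  rw [indicator_interleave]
  exact hasSum_conditional_interleave hS hT

end Interleave

/-- Let `x` be a positive summable sequence with sum `X` satisfying
(i) `A(x) + A(x) = [0, 2X]` and (ii) for every `a ∈ (0, 2X)` there is a nondegenerate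
interval `I ⊆ A(x)` each of whose points `t` admits `z ∈ A(x)` with `t + z = a`. Let
`∑ y_k` be conditionally convergent with sum `Y`. Interleave to the sequence of pairs
`(x̄_n, ȳ_n)` with `x̄_{2k-1} = x̄_{2k} = x_k`, `ȳ_{2k-1} = y_k`, `ȳ_{2k} = 0`. Then its
achievement set equals `((0, 2X) × ℝ) ∪ {(0,0), (2X, Y)}`. -/
theorem stmt_16 (x y : ℕ → ℝ) (X Y : ℝ)
    (hxpos : ∀ k, 0 < x k) (hX : HasSum x X)
    (hi : achv x + achv x = Set.Icc 0 (2 * X))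
    (hii : ∀ a ∈ Set.Ioo (0 : ℝ) (2 * X), ∃ I : Set ℝ, I ⊆ achv x ∧ I.OrdConnected ∧
      I.Nontrivial ∧ ∀ t ∈ I, ∃ z ∈ achv x, t + z = a)
    (hY : Tendsto (fun N => ∑ k ∈ Finset.range N, y k) atTop (𝓝 Y))
    (hynabs : ¬ Summable fun k => |y k|) :
    achv (fun n => ((x (n / 2), if n % 2 = 0 then y (n / 2) else 0) : ℝ × ℝ)) =
      (Set.Ioo (0 : ℝ) (2 * X) ×ˢ (Set.univ : Set ℝ)) ∪
        {((0 : ℝ), (0 : ℝ)), ((2 * X : ℝ), Y)} := by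
  have hzip : (fun n => ((x (n / 2), if n % 2 = 0 then y (n / 2) else 0) : ℝ × ℝ)) =
      interleave (fun k => (x k, y k)) fun k => (x k, 0) := by
    ext n <;> by_cases hn : n % 2 = 0 <;> simp [interleave, hn]
  have hX' := hasSum_conditional_of_hasSum hX
  have hY' := hasSum_conditional_iff_tendsto_sum_range.2 hY
  have htotal := hasSum_conditional_interleave (hX'.prodMk hY') (hX'.prodMk hasSum_zero)
  rw [Prod.mk_add_mk, ← two_mul, add_zero] at htotal
  rw [hzip]
  refine (achv_subset_of_fst_pos (fun n => ?_) htotal).antisymm (Set.union_subset ?_ ?_)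
  · unfold interleave
    split_ifs <;> exact hxpos _
  · rintro ⟨a, b⟩ ⟨ha, -⟩
    obtain ⟨I, hIx, hI, hnt, hcompl⟩ := hii a ha
    obtain ⟨t, htI, ht⟩ := inter_nonempty_of_ordConnected_of_subset_closure hI hnt <|
      hIx.trans <| achv_subset_closure_achv_prodMk_fiber hX.summable.norm hY'.summable
        (mt Summable.abs hynabs) b
    obtain ⟨z, hz, rfl⟩ := hcompl t htI
    rw [← add_zero b, ← Prod.mk_add_mk]
    exact achv_add_achv_subset_achv_interleave (Set.add_mem_add ht (prodMk_zero_mem_achv hz))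
  · exact Set.pair_subset (zero_mem_achv _) (mem_achv_of_hasSum htotal)
end

section
/- Let ∑ x_k be a conditionally convergent series in ℝ, and let ∑ y_k be an absolutely convergent series in ℝ such that the map ε ↦ ∑_k ε(k)·y(k) from {0,1}^ℕ to ℝ is injective. Then the intersection over all permutations σ of ℕ of the achievement sets of the rearranged sequences of pairs satisfies ⋂_{σ} A((x_{σ(k)}, y_{σ(k)})_k) = A_abs((x_k, y_k)_k), where A_abs(z) = {∑_k ε(k)·z(k) : ε ∈ {0,1}^ℕ and ∑_k ε(k)·‖z(k)‖ < ∞}. -/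
open Filter Topology

/-- The absolute achievement set: sums of absolutely convergent subseries. -/
def absAchv {X : Type*} [NormedAddCommGroup X] (x : ℕ → X) : Set X :=
  {s | ∃ ε : ℕ → Bool, (Summable fun n => ‖if ε n then x n else 0‖) ∧
    HasSum (fun n => if ε n then x n else 0) s}

/-! The second coordinate of a subseries sum does not depend on the order of summation, so for a
point `s` of the intersection injectivity forces every rearrangement to represent `s` by the same
subseries. All rearrangements of that one subseries converge to `s`, hence it converges
unconditionally, which in finite dimension means absolutely. -/

section Rearrangement

theorem exists_perm_strictMono_comp {f : ℕ → ℕ} (hf : Function.Injective f) :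
    ∃ σ : Equiv.Perm ℕ, StrictMono (f ∘ σ) := by
  have : Infinite (Set.range f) := (Set.infinite_range_of_injective hf).to_subtype
  let enum : ℕ ≃o Set.range f := Nat.Subtype.orderIsoOfNat (Set.range f)
  refine ⟨enum.toEquiv.trans (Equiv.ofInjective f hf).symm, fun i j hij => ?_⟩
  have apply_enum (i : ℕ) : f ((Equiv.ofInjective f hf).symm (enum i)) = enum i :=
    Equiv.apply_ofInjective_symm hf (enum i)
  simpa [apply_enum] using enum.strictMono hij

theorem exists_perm_monotone_comp {α : Type*} [LinearOrder α] {f : ℕ → α}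
    (hf : ∀ k, {j | f j ≤ f k}.Finite) :
    ∃ σ : Equiv.Perm ℕ, Monotone (f ∘ σ) := by
  -- Ties of `f` are broken by the index, and a permutation sorts the ranks in this order.
  let key : ℕ → α ×ₗ ℕ := fun k => toLex (f k, k)
  let rank : ℕ → ℕ := fun k => {j | key j < key k}.ncard
  have key_injective : Function.Injective key := fun j k h => congrArg (fun p => (ofLex p).2) h
  have finite_lt (k : ℕ) : {j | key j < key k}.Finite :=
    (hf k).subset fun j hj => Prod.Lex.monotone_fst (key j) (key k) (le_of_lt hj)
  have rank_lt {j k : ℕ} (h : key j < key k) : rank j < rank k :=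
    Set.ncard_lt_ncard (Set.ssubset_iff_exists.2
      ⟨fun i hi => lt_trans (Set.mem_ofPred.1 hi) h, j, h, lt_irrefl (key j)⟩) (finite_lt k)
  have rank_injective : Function.Injective rank := fun j k h =>
    key_injective <| by
      by_contra hne
      rcases lt_or_gt_of_ne hne with hlt | hgt
      · exact (rank_lt hlt).ne h
      · exact (rank_lt hgt).ne' h
  obtain ⟨σ, hσ⟩ := exists_perm_strictMono_comp rank_injective
  refine ⟨σ, fun i j hij => Prod.Lex.monotone_fst (key (σ i)) (key (σ j)) ?_⟩
  exact not_lt.1 fun hlt => (hσ.monotone hij).not_gt (rank_lt hlt)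

theorem eq_range_card_of_isLowerSet {s : Finset ℕ} (hs : IsLowerSet (s : Set ℕ)) :
    s = Finset.range s.card := by
  rcases hs.eq_univ_or_Iio with huniv | ⟨a, ha⟩
  · exact absurd (huniv ▸ s.finite_toSet) Set.infinite_univ
  · have hrange : s = Finset.range a := by rw [← Finset.coe_inj, ha, Finset.coe_range]
    rw [hrange, Finset.card_range]

theorem exists_perm_forall_map_range_card_eq {G : ℕ → Finset ℕ} (hmono : Monotone G)
    (hcover : ∀ k, ∃ n, k ∈ G n) :
    ∃ σ : Equiv.Perm ℕ, ∀ n, (Finset.range (G n).card).map σ.toEmbedding = G n := by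
  let level : ℕ → ℕ := fun k => Nat.find (hcover k)
  have level_le_iff (k n : ℕ) : level k ≤ n ↔ k ∈ G n :=
    ⟨fun h => hmono h (Nat.find_spec (hcover k)), fun h => Nat.find_min' (hcover k) h⟩
  obtain ⟨σ, hσ⟩ : ∃ σ : Equiv.Perm ℕ, Monotone (level ∘ σ) :=
    exists_perm_monotone_comp fun k => by
      simp only [level_le_iff]
      exact (G (level k)).finite_toSet
  refine ⟨σ, fun n => ?_⟩
  have mem_preimage (i : ℕ) : i ∈ (G n).map σ.symm.toEmbedding ↔ level (σ i) ≤ n := by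
    rw [Finset.mem_map_equiv, Equiv.symm_symm, level_le_iff]
  have hlower : IsLowerSet ((G n).map σ.symm.toEmbedding : Set ℕ) := fun i j hji hi =>
    (mem_preimage j).2 ((hσ hji).trans ((mem_preimage i).1 hi))
  have hpre := eq_range_card_of_isLowerSet hlower
  rw [Finset.card_map] at hpre
  rw [← hpre, Finset.map_map]
  ext k
  simp

theorem exists_strictMono_monotone_comp_of_tendsto_atTop {α : Type*} [Preorder α]
    {u : ℕ → α} (hu : Tendsto u atTop atTop) : ∃ φ : ℕ → ℕ, StrictMono φ ∧ Monotone (u ∘ φ) := by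
  obtain ⟨φ, hle | hnle⟩ := exists_increasing_or_nonincreasing_subseq (· ≤ ·) u
  · exact ⟨φ, φ.strictMono, monotone_iff_forall_lt.2 fun m n => hle m n⟩
  · have hev : ∀ᶠ n in atTop, u (φ 0) ≤ u (φ n) :=
      (hu.comp φ.strictMono.tendsto_atTop).eventually_ge_atTop (u (φ 0))
    obtain ⟨n, hn, hpos⟩ := (hev.and (eventually_gt_atTop 0)).exists
    exact absurd hn (hnle 0 n hpos)

theorem hasSum_iff_forall_perm_tendsto {X : Type*} [AddCommMonoid X] [TopologicalSpace X]
    {u : ℕ → X} {s : X} :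
    HasSum u s ↔
      ∀ σ : Equiv.Perm ℕ, Tendsto (fun N => ∑ n ∈ Finset.range N, u (σ n)) atTop (𝓝 s) := by
  refine ⟨fun h σ => (σ.hasSum_iff.2 h).tendsto_sum_nat, fun h => ?_⟩
  -- Along a sequence of finsets tending to `atTop`, a monotone subsequence consists of initial
  -- segments of a single rearrangement.
  rw [HasSum, SummationFilter.unconditional_filter]
  refine tendsto_of_subseq_tendsto fun F hF => ?_
  obtain ⟨φ, hφ, hmono⟩ := exists_strictMono_monotone_comp_of_tendsto_atTop hF
  have hFφ : Tendsto (F ∘ φ) atTop atTop := hF.comp hφ.tendsto_atTop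
  have hcover (k : ℕ) : ∃ n, k ∈ F (φ n) :=
    (hFφ.eventually_ge_atTop {k}).exists.imp fun _ => Finset.singleton_subset_iff.1
  obtain ⟨σ, hσ⟩ := exists_perm_forall_map_range_card_eq hmono hcover
  refine ⟨φ, ((h σ).comp (tendsto_card_atTop_atTop.comp hFφ)).congr fun n => ?_⟩
  calc ∑ i ∈ Finset.range (F (φ n)).card, u (σ i)
      = ∑ k ∈ (Finset.range (F (φ n)).card).map σ.toEmbedding, u k :=
        (Finset.sum_map _ σ.toEmbedding u).symm
    _ = ∑ k ∈ F (φ n), u k := congrArg (fun s => ∑ k ∈ s, u k) (hσ n)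

end Rearrangement

section AchievementSet

theorem mem_achv_comp_perm_iff {X : Type*} [AddCommMonoid X] [TopologicalSpace X] {z : ℕ → X}
    {σ : Equiv.Perm ℕ} {s : X} :
    s ∈ achv (fun k => z (σ k)) ↔ ∃ ε : ℕ → Bool,
      Tendsto (fun N => ∑ n ∈ Finset.range N, if ε (σ n) then z (σ n) else 0) atTop (𝓝 s) := by
  refine ⟨fun ⟨ε, hε⟩ => ⟨ε ∘ σ.symm, ?_⟩, fun ⟨ε, hε⟩ => ⟨ε ∘ σ, hε⟩⟩
  simpa only [Function.comp_apply, Equiv.symm_apply_apply] using hε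

theorem absAchv_subset_iInter_achv {X : Type*} [NormedAddCommGroup X] (z : ℕ → X) :
    absAchv z ⊆ ⋂ σ : Equiv.Perm ℕ, achv (fun k => z (σ k)) := by
  rintro s ⟨ε, -, hε⟩
  exact Set.mem_iInter.2 fun σ =>
    mem_achv_comp_perm_iff.2 ⟨ε, hasSum_iff_forall_perm_tendsto.1 hε σ⟩

variable {F : Type*} [AddCommGroup F] [UniformSpace F] [IsUniformAddGroup F] [CompleteSpace F]
  [T2Space F]

theorem tsum_ite_eq_of_tendsto_perm {y : ℕ → F} (hy : Summable y) {ε : ℕ → Bool}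
    {σ : Equiv.Perm ℕ} {t : F}
    (h : Tendsto (fun N => ∑ n ∈ Finset.range N, if ε (σ n) then y (σ n) else 0) atTop (𝓝 t)) :
    ∑' k, (if ε k then y k else 0) = t := by
  have hsub : Summable fun k => if ε k then y k else 0 :=
    hy.summable_of_eq_zero_or_self fun k => by split_ifs <;> simp
  exact tendsto_nhds_unique (hasSum_iff_forall_perm_tendsto.1 hsub.hasSum σ) h

theorem exists_hasSum_of_mem_iInter_achv {X : Type*} [AddCommMonoid X] [TopologicalSpace X]
    {z : ℕ → X} {s : X} (π : X →+ F) (hπ : Continuous π) (hsum : Summable fun k => π (z k))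
    (hinj : Function.Injective fun ε : ℕ → Bool => ∑' k, if ε k then π (z k) else 0)
    (hs : s ∈ ⋂ σ : Equiv.Perm ℕ, achv (fun k => z (σ k))) :
    ∃ ε : ℕ → Bool, HasSum (fun k => if ε k then z k else 0) s := by
  simp only [Set.mem_iInter, mem_achv_comp_perm_iff] at hs
  choose ε hε using hs
  have tsum_eq (σ : Equiv.Perm ℕ) : ∑' k, (if ε σ k then π (z k) else 0) = π s := by
    refine tsum_ite_eq_of_tendsto_perm hsum (σ := σ) ?_
    refine ((hπ.tendsto s).comp (hε σ)).congr fun N => ?_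
    simp only [Function.comp_apply, map_sum, apply_ite π, map_zero]
  have ε_eq (σ : Equiv.Perm ℕ) : ε σ = ε 1 := hinj ((tsum_eq σ).trans (tsum_eq 1).symm)
  exact ⟨ε 1, hasSum_iff_forall_perm_tendsto.2 fun σ => ε_eq σ ▸ hε σ⟩

end AchievementSet

theorem stmt_18_general {E F : Type*} [NormedAddCommGroup E] [NormedSpace ℝ E]
    [FiniteDimensional ℝ E] [NormedAddCommGroup F] [CompleteSpace F] (x : ℕ → E) (y : ℕ → F)
    (hy : Summable fun k => ‖y k‖)
    (hinj : Function.Injective fun ε : ℕ → Bool => ∑' k, if ε k then y k else 0) :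
    ⋂ σ : Equiv.Perm ℕ, achv (fun k => (x (σ k), y (σ k))) = absAchv (fun k => (x k, y k)) := by
  refine Set.Subset.antisymm (fun s hs => ?_) (absAchv_subset_iInter_achv fun k => (x k, y k))
  obtain ⟨ε, hε⟩ : ∃ ε : ℕ → Bool, HasSum (fun k => if ε k then (x k, y k) else 0) s :=
    exists_hasSum_of_mem_iInter_achv (AddMonoidHom.snd E F) continuous_snd hy.of_norm hinj hs
  have hx : Summable fun k => ‖if ε k then x k else 0‖ := by
    refine summable_norm_iff.2 ((hε.summable.map (AddMonoidHom.fst E F) continuous_fst).congr ?_)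
    intro k
    simp only [Function.comp_apply, AddMonoidHom.coe_fst, apply_ite Prod.fst, Prod.fst_zero]
  refine ⟨ε, (hx.add hy).of_nonneg_of_le (fun k => norm_nonneg _) fun k => ?_, hε⟩
  split_ifs
  · exact norm_prod_le_iff.2 ⟨le_add_of_nonneg_right (norm_nonneg _),
      le_add_of_nonneg_left (norm_nonneg _)⟩
  · simp

/-- If `∑ x_k` is conditionally convergent in `ℝ`, and `∑ y_k` is absolutely
convergent with `ε ↦ ∑ ε_k y_k` injective, then the intersection over all permutations `σ`
of the achievement sets of the rearranged pair sequences equals the absolute achievement set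
of the pair sequence. -/
theorem stmt_18 (x y : ℕ → ℝ)
    (hx_conv : ∃ s, Tendsto (fun N => ∑ k ∈ Finset.range N, x k) atTop (𝓝 s))
    (hx_nabs : ¬ Summable fun k => |x k|)
    (hy : Summable fun k => |y k|)
    (hinj : Function.Injective fun ε : ℕ → Bool => ∑' k, if ε k then y k else 0) :
    ⋂ σ : Equiv.Perm ℕ, achv (fun k => ((x (σ k), y (σ k)) : ℝ × ℝ)) =
      absAchv (fun k => ((x k, y k) : ℝ × ℝ)) :=
  stmt_18_general x y hy hinj
end
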